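/- arXiv:math/9908136 — 7 statements merged into one kernel-verified Lean document; each statement's English description precedes it below -/
import Mathlib

section
/- Let E be a finite-dimensional real vector space. Let g : ℝ → (E →ₗ[ℝ] E →ₗ[ℝ] ℝ) be a family of symmetric positive-definite bilinear forms (inner products) on E such that for all x, y ∈ E the function s ↦ g s x y is differentiable. Let d : E →ₗ[ℝ] E be a fixed linear map, and let dstar : ℝ → (E →ₗ[ℝ] E) be a family of linear maps, differentiable in s, such that for all s and all x, y ∈ E one has g s (dstar s x) y = g s x (d y) (i.e. dstar s is the g s-adjoint of d). Let Z : ℝ → (E →ₗ[ℝ] E) satisfy, for all s and all x, y ∈ E, deriv (fun t => g t x y) s = g s (Z s x) y. Then for every s, deriv dstar s = dstar s ∘ Z s − Z s ∘ dstar s, i.e. the derivative of the adjoint is the commutator [dstar s, Z s]. -/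
/-- Abstract form of the first Lemma of Section 2 of Lott,
"On the Spectrum of a Finite-Volume Negatively-Curved Manifold":
if `g s` is a smoothly varying family of inner products on a
finite-dimensional real vector space `E`, `d` is a fixed linear map,
`dstar s` is the `g s`-adjoint of `d`, and `Z s` represents the derivative
of `g` (i.e. `∂_s g(x,y) = g(Z x, y)`), then `∂_s dstar = dstar ∘ Z − Z ∘ dstar`,
the commutator `[dstar, Z]` (stated pointwise, applied to each vector `x`). -/
theorem stmt_0 {E : Type*} [NormedAddCommGroup E] [NormedSpace ℝ E]
    [FiniteDimensional ℝ E]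
    (g : ℝ → (E →ₗ[ℝ] E →ₗ[ℝ] ℝ)) (d : E →ₗ[ℝ] E) (dstar Z : ℝ → (E →ₗ[ℝ] E))
    (hsymm : ∀ s (x y : E), g s x y = g s y x)
    (hpos : ∀ s (x : E), x ≠ 0 → 0 < g s x x)
    (hgdiff : ∀ x y : E, Differentiable ℝ (fun s => g s x y))
    (hdstardiff : ∀ x : E, Differentiable ℝ (fun s => dstar s x))
    (hadj : ∀ s (x y : E), g s (dstar s x) y = g s x (d y))
    (hZ : ∀ s (x y : E), deriv (fun t => g t x y) s = g s (Z s x) y) :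
    ∀ s (x : E), deriv (fun t => dstar t x) s =
      dstar s (Z s x) - Z s (dstar s x) := by
  intro s x
  have hg : ∀ u v : E, HasDerivAt (fun t => g t u v) (g s (Z s u) v) s := fun u v => by
    rw [← hZ s u v]
    exact (hgdiff u v s).hasDerivAt
  have hD := (hdstardiff x s).hasDerivAt
  set D' := deriv (fun t => dstar t x) s with hD'
  let b := Module.finBasis ℝ E
  have hc : ∀ i, HasDerivAt (fun t => b.coord i (dstar t x)) (b.coord i D') s := fun i =>
    (LinearMap.toContinuousLinearMap (b.coord i)).hasFDerivAt.comp_hasDerivAt s hD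
  have hexp : ∀ (f : E →ₗ[ℝ] ℝ) (v : E), ∑ i, b.coord i v * f (b i) = f v := fun f v => by
    conv_rhs => rw [← b.sum_repr v, map_sum]
    simp only [map_smul, smul_eq_mul, Module.Basis.coord_apply]
  have key : ∀ y, g s D' y + g s (Z s (dstar s x)) y = g s (dstar s (Z s x)) y := fun y => by
    have h1 : HasDerivAt (fun t => ∑ i, b.coord i (dstar t x) * g t (b i) y)
        (∑ i, (b.coord i D' * g s (b i) y
          + b.coord i (dstar s x) * g s (Z s (b i)) y)) s :=
      HasDerivAt.fun_sum fun i _ => (hc i).mul (hg (b i) y)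
    have h2 : (fun t => ∑ i, b.coord i (dstar t x) * g t (b i) y)
        = fun t => g t x (d y) := by
      funext t
      rw [← hadj]
      exact hexp ((g t).flip y) (dstar t x)
    rw [h2] at h1
    have h3 := h1.unique (hg x (d y))
    rw [Finset.sum_add_distrib] at h3
    have e1 := hexp ((g s).flip y) D'
    have e2 := hexp ((g s).flip y ∘ₗ Z s) (dstar s x)
    simp only [LinearMap.flip_apply, LinearMap.comp_apply] at e1 e2
    rw [e1, e2] at h3
    rw [h3, hadj]
  by_contra hne
  have h := hpos s _ (sub_ne_zero.mpr hne)
  have hk := key (D' - (dstar s (Z s x) - Z s (dstar s x)))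
  rw [map_sub (g s), map_sub (g s), LinearMap.sub_apply, LinearMap.sub_apply] at h
  linarith
end

section
/- Let E be a real Banach space and let G, Δ : ℝ → (E →L[ℝ] E) be operator-valued functions that are differentiable (in operator norm) at every s, and let P : E →L[ℝ] E be a fixed continuous linear operator. Suppose that for every s one has Δ s ∘ G s = G s ∘ Δ s = 1 − P and P ∘ G s = G s ∘ P = 0, where 1 denotes the identity operator. Then for every s, deriv G s = −(G s ∘ (deriv Δ s) ∘ G s). -/
/-- Derivative formula for the Green's operator (Section 2 of Lott,
"On the Spectrum of a Finite-Volume Negatively-Curved Manifold"):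
if `Δ s ∘ G s = G s ∘ Δ s = 1 − P` and `P ∘ G s = G s ∘ P = 0` for a fixed
projection `P`, with `G` and `Δ` differentiable in operator norm, then
`∂_s G = −G (∂_s Δ) G`. -/
theorem stmt_1 {E : Type*} [NormedAddCommGroup E] [NormedSpace ℝ E]
    [CompleteSpace E]
    (G Δ : ℝ → (E →L[ℝ] E)) (P : E →L[ℝ] E)
    (hG : Differentiable ℝ G) (hΔ : Differentiable ℝ Δ)
    (hΔG : ∀ s, (Δ s).comp (G s) = 1 - P)
    (hGΔ : ∀ s, (G s).comp (Δ s) = 1 - P)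
    (hPG : ∀ s, P.comp (G s) = 0)
    (hGP : ∀ s, (G s).comp P = 0) :
    ∀ s, deriv G s = -((G s).comp ((deriv Δ s).comp (G s))) := by
  intro s
  have h1 : HasDerivAt (fun t => Δ t * G t) (deriv Δ s * G s + Δ s * deriv G s) s :=
    (hΔ s).hasDerivAt.mul (hG s).hasDerivAt
  have h2 : HasDerivAt (fun t => P * G t) (P * deriv G s) s :=
    (hG s).hasDerivAt.const_mul P
  have e1 : (fun t => Δ t * G t) = fun _ => 1 - P := funext hΔG
  have e2 : (fun t => P * G t) = fun _ => 0 := funext hPG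
  rw [e1] at h1
  rw [e2] at h2
  have k1 : deriv Δ s * G s + Δ s * deriv G s = 0 := h1.unique (hasDerivAt_const s _)
  have k2 : P * deriv G s = 0 := h2.unique (hasDerivAt_const s _)
  have k3 : G s * Δ s = 1 - P := hGΔ s
  change deriv G s = -(G s * (deriv Δ s * G s))
  have k4 : G s * (deriv Δ s * G s) + (G s * Δ s) * deriv G s = 0 := by
    rw [mul_assoc (G s) (Δ s), ← mul_add, k1, mul_zero]
  rw [k3, sub_mul, one_mul, k2, sub_zero] at k4
  exact eq_neg_of_add_eq_zero_right k4
end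

section
/- Let E be a real Banach space. Let d, P : E →L[ℝ] E be fixed continuous linear operators, and let dstar, G, V : ℝ → (E →L[ℝ] E) be operator-valued functions with dstar and G differentiable (in operator norm) at every s. For each s put Δ s = d ∘ dstar s + dstar s ∘ d. Assume that for every s: (i) d ∘ d = 0 and dstar s ∘ dstar s = 0; (ii) Δ s ∘ G s = G s ∘ Δ s = 1 − P and P ∘ G s = G s ∘ P = 0; (iii) G s commutes with d and with dstar s, and P commutes with dstar s and with V s; (iv) deriv dstar s = dstar s ∘ V s − V s ∘ dstar s. Then for every s, deriv (fun t => dstar t ∘ G t) s = −(d ∘ W s − W s ∘ d), where W s = G s ∘ dstar s ∘ V s ∘ dstar s ∘ G s. -/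
theorem stmt_2_alg {A : Type*} [Ring A] (d P δ G V δp Gp : A)
    (hδ2 : δ * δ = 0)
    (hΔG : (d * δ + δ * d) * G = 1 - P)
    (hGΔ : G * (d * δ + δ * d) = 1 - P)
    (hPG : P * G = 0)
    (hGd : G * d = d * G) (hGδ : G * δ = δ * G)
    (hPδ : P * δ = δ * P) (hPV : P * V = V * P)
    (hδp : δp = δ * V - V * δ)
    (hPGp : P * Gp = 0)
    (hΔp : (d * δp + δp * d) * G + (d * δ + δ * d) * Gp = 0) :
    δp * G + δ * Gp = -(d * (G * (δ * (V * (δ * G)))) - G * (δ * (V * (δ * G))) * d) := by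
  have h1 : Gp = -(G * ((d * δp + δp * d) * G)) := by
    have h2 : G * ((d * δ + δ * d) * Gp) = Gp := by
      rw [← mul_assoc, hGΔ, sub_mul, hPGp, one_mul, sub_zero]
    rw [eq_neg_of_add_eq_zero_left hΔp, mul_neg, h2, neg_neg]
  have hPδp : P * δp = δp * P := by
    rw [hδp, mul_sub, sub_mul, ← mul_assoc, ← mul_assoc, hPδ, hPV, mul_assoc, mul_assoc, hPδ, hPV]
    simp only [mul_assoc]
  have h3 : δ * G * d = 1 - P - d * (G * δ) := by
    rw [← hΔG, add_mul, mul_assoc, mul_assoc, mul_assoc, hGd, hGδ]; abel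
  have h4 : δ * δp = -(δ * V * δ) := by
    rw [hδp, mul_sub, ← mul_assoc, hδ2, zero_mul, zero_sub, mul_assoc]
  have h5 : P * δp * G = 0 := by rw [hPδp, mul_assoc, hPG, mul_zero]
  calc δp * G + δ * Gp = δp * G - (δ * G * d) * δp * G - δ * G * δp * (d * G) := by
        rw [h1]; noncomm_ring
    _ = P * δp * G + d * (G * (δ * δp)) * G - G * (δ * δp) * (G * d) := by
        rw [h3, ← hGd, ← hGδ]; noncomm_ring
    _ = _ := by rw [h5, h4]; noncomm_ring

/-- Abstract form of the second Lemma of Section 2 of Lott,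
"On the Spectrum of a Finite-Volume Negatively-Curved Manifold":
`∂_s (d̂* G) = −[d̂, G d̂* V d̂* G]`, where `d` is a fixed operator with
`d² = 0`, `dstar s` its `s`-dependent adjoint with `(dstar s)² = 0` and
`∂_s dstar = [dstar, V]`, `Δ s = d ∘ dstar s + dstar s ∘ d`, `P` a fixed
projection, and `G` the Green's operator: `ΔG = GΔ = 1 − P`, `PG = GP = 0`. -/
theorem stmt_2 {E : Type*} [NormedAddCommGroup E] [NormedSpace ℝ E]
    [CompleteSpace E]
    (d P : E →L[ℝ] E) (dstar G V : ℝ → (E →L[ℝ] E))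
    (hdstar : Differentiable ℝ dstar) (hG : Differentiable ℝ G)
    (hd2 : d.comp d = 0)
    (hdstar2 : ∀ s, (dstar s).comp (dstar s) = 0)
    (hΔG : ∀ s, (d.comp (dstar s) + (dstar s).comp d).comp (G s) = 1 - P)
    (hGΔ : ∀ s, (G s).comp (d.comp (dstar s) + (dstar s).comp d) = 1 - P)
    (hPG : ∀ s, P.comp (G s) = 0)
    (hGP : ∀ s, (G s).comp P = 0)
    (hGd : ∀ s, (G s).comp d = d.comp (G s))
    (hGdstar : ∀ s, (G s).comp (dstar s) = (dstar s).comp (G s))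
    (hPdstar : ∀ s, P.comp (dstar s) = (dstar s).comp P)
    (hPV : ∀ s, P.comp (V s) = (V s).comp P)
    (hdstarderiv : ∀ s, deriv dstar s =
      (dstar s).comp (V s) - (V s).comp (dstar s)) :
    ∀ s, deriv (fun t => (dstar t).comp (G t)) s =
      -(d.comp ((G s).comp ((dstar s).comp ((V s).comp ((dstar s).comp (G s)))))
        - ((G s).comp ((dstar s).comp ((V s).comp ((dstar s).comp (G s))))).comp d) := by
  intro s
  have hδ := (hdstar s).hasDerivAt
  have hg := (hG s).hasDerivAt
  have hPGp : P * deriv G s = 0 := by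
    have h1 : HasDerivAt (fun t => P * G t) (P * deriv G s) s := hg.const_mul P
    have h2 : (fun t => P * G t) = fun _ => 0 := funext hPG
    rw [h2] at h1
    exact h1.unique (hasDerivAt_const s _)
  have hΔp : (d * deriv dstar s + deriv dstar s * d) * G s
      + (d * dstar s + dstar s * d) * deriv G s = 0 := by
    have h1 : HasDerivAt (fun t => (d * dstar t + dstar t * d) * G t) _ s :=
      ((hδ.const_mul d).add (hδ.mul_const d)).mul hg
    have h2 : (fun t => (d * dstar t + dstar t * d) * G t) = fun _ => 1 - P := funext hΔG
    rw [h2] at h1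
    exact h1.unique (hasDerivAt_const s _)
  have h : HasDerivAt (fun t => (dstar t).comp (G t)) (deriv dstar s * G s + dstar s * deriv G s) s :=
    hδ.mul hg
  rw [h.deriv]
  exact stmt_2_alg d P (dstar s) (G s) (V s) (deriv dstar s) (deriv G s) (hdstar2 s) (hΔG s)
    (hGΔ s) (hPG s) (hGd s) (hGdstar s) (hPdstar s) (hPV s) (hdstarderiv s) hPGp hΔp
end

section
/- Let E be a real Banach space. Let d, P : E →L[ℝ] E be fixed continuous linear operators, and let dstar, G, W : ℝ → (E →L[ℝ] E) be operator-valued functions with dstar ∘ G (the function s ↦ dstar s ∘ G s) differentiable in operator norm. For each s put Δ s = d ∘ dstar s + dstar s ∘ d. Assume that for every s: (i) Δ s ∘ G s = 1 − P; (ii) G s commutes with d; (iii) deriv (fun t => dstar t ∘ G t) s = −(d ∘ W s − W s ∘ d). For differentiable functions ω, η : ℝ → E define 𝒟(ω, η) = (s ↦ d (ω s), s ↦ deriv ω s − d (η s)) and 𝒦(ω, η) = (s ↦ dstar s (G s (ω s)), s ↦ −(W s) (ω s) − dstar s (G s (η s))). Then for all differentiable ω, η : ℝ → E, 𝒟(𝒦(ω,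 η)) + 𝒦(𝒟(ω, η)) = (s ↦ (1 − P)(ω s), s ↦ (1 − P)(η s)). -/
/-- The total exterior derivative `𝒟 = d̂ + e(ds) ∂_s` in the two-component model:
a form on `[0,∞) × N` is the pair `(ω, η)` corresponding to `ω + ds ∧ η`. -/
noncomputable def Dop {E : Type*} [NormedAddCommGroup E] [NormedSpace ℝ E]
    (d : E →L[ℝ] E) (p : (ℝ → E) × (ℝ → E)) : (ℝ → E) × (ℝ → E) :=
  (fun s => d (p.1 s), fun s => deriv p.1 s - d (p.2 s))

/-- The homotopy operator `𝒦 = d̂* G − e(ds) W` with `W = G d̂* V d̂* G`. -/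
noncomputable def Kop {E : Type*} [NormedAddCommGroup E] [NormedSpace ℝ E]
    (dstar G W : ℝ → (E →L[ℝ] E)) (p : (ℝ → E) × (ℝ → E)) : (ℝ → E) × (ℝ → E) :=
  (fun s => dstar s (G s (p.1 s)), fun s => -(W s (p.1 s)) - dstar s (G s (p.2 s)))

/-- Homotopy formula `𝒟 𝒦 + 𝒦 𝒟 = 1 − P` (third Lemma of Section 2 of Lott,
"On the Spectrum of a Finite-Volume Negatively-Curved Manifold"). -/
theorem stmt_3 {E : Type*} [NormedAddCommGroup E] [NormedSpace ℝ E]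
    [CompleteSpace E]
    (d P : E →L[ℝ] E) (dstar G W : ℝ → (E →L[ℝ] E))
    (hdiff : Differentiable ℝ (fun s => (dstar s).comp (G s)))
    (hi : ∀ s, (d.comp (dstar s) + (dstar s).comp d).comp (G s) = 1 - P)
    (hii : ∀ s, (G s).comp d = d.comp (G s))
    (hiii : ∀ s, deriv (fun t => (dstar t).comp (G t)) s =
      -(d.comp (W s) - (W s).comp d)) :
    ∀ ω η : ℝ → E, Differentiable ℝ ω → Differentiable ℝ η →
      Dop d (Kop dstar G W (ω, η)) + Kop dstar G W (Dop d (ω, η)) =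
        (fun s => ω s - P (ω s), fun s => η s - P (η s)) := by
  intro ω η hω _
  have key : ∀ s x, d (dstar s (G s x)) + dstar s (G s (d x)) = x - P x := by
    intro s x
    have h1 := DFunLike.congr_fun (hi s) x
    have h2 : G s (d x) = d (G s x) := DFunLike.congr_fun (hii s) x
    rw [h2]
    exact h1
  have hder : ∀ s, deriv (fun t => dstar t (G t (ω t))) s =
      -(d (W s (ω s)) - W s (d (ω s))) + dstar s (G s (deriv ω s)) := by
    intro s
    have h := ((hdiff s).hasDerivAt.clm_apply (hω s).hasDerivAt).deriv
    rw [hiii s] at h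
    exact h
  refine Prod.ext ?_ ?_
  · funext s
    exact key s (ω s)
  · funext s
    change (deriv (fun t => dstar t (G t (ω t))) s
        - d (-(W s (ω s)) - dstar s (G s (η s))))
      + (-(W s (d (ω s))) - dstar s (G s (deriv ω s - d (η s)))) = η s - P (η s)
    rw [hder s, ← key s (η s)]
    simp only [map_sub, map_neg]
    abel
end

section
/- Let v : ℝ → ℝ be twice continuously differentiable with v s > 0 for all s, and let f : ℝ → ℝ be continuously differentiable, compactly supported, with f 0 = 0. Put k s = Real.sqrt (v s) * f s and L s = Real.log (v s). Then ∫ s in Set.Ioi (0:ℝ), (deriv f s)^2 * v s = ∫ s in Set.Ioi (0:ℝ), ((deriv k s)^2 + ((1/2) * deriv (deriv L) s + (1/4) * (deriv L s)^2) * (k s)^2). -/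
/-- The quadratic-form identity of the Lemma in Section 8 of Lott,
"On the Spectrum of a Finite-Volume Negatively-Curved Manifold":
with `k = v^{1/2} f` and `L = ln v`,
`∫₀^∞ (f')² v ds = ∫₀^∞ (k')² + (½ L'' + ¼ (L')²) k² ds`. -/
theorem stmt_5 (v f : ℝ → ℝ) (hv : ContDiff ℝ 2 v) (hvpos : ∀ s, 0 < v s)
    (hf : ContDiff ℝ 1 f) (hfc : HasCompactSupport f) (hf0 : f 0 = 0) :
    ∫ s in Set.Ioi (0 : ℝ), (deriv f s) ^ 2 * v s =
      ∫ s in Set.Ioi (0 : ℝ),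
        ((deriv (fun t => Real.sqrt (v t) * f t) s) ^ 2 +
          ((1 / 2) * deriv (deriv (fun t => Real.log (v t))) s +
            (1 / 4) * (deriv (fun t => Real.log (v t)) s) ^ 2) *
          (Real.sqrt (v s) * f s) ^ 2) := by
  have hv1 : ContDiff ℝ 1 (deriv v) := by
    have h : ContDiff ℝ (1 + 1) v := by
      convert hv using 1
      norm_num
    exact (contDiff_succ_iff_deriv.mp h).2.2
  have dv : ∀ s, HasDerivAt v (deriv v s) s := fun s =>
    (hv.differentiable (by norm_num) s).hasDerivAt
  have dv1 : ∀ s, HasDerivAt (deriv v) (deriv (deriv v) s) s := fun s =>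
    (hv1.differentiable (by norm_num) s).hasDerivAt
  have df : ∀ s, HasDerivAt f (deriv f s) s := fun s =>
    (hf.differentiable (by norm_num) s).hasDerivAt
  have hL : deriv (fun t => Real.log (v t)) = fun t => deriv v t / v t := by
    funext t
    exact ((dv t).log (hvpos t).ne').deriv
  have hL2 : ∀ s, deriv (fun t => deriv v t / v t) s =
      (deriv (deriv v) s * v s - deriv v s * deriv v s) / (v s) ^ 2 := fun s =>
    ((dv1 s).div (dv s) (hvpos s).ne').deriv
  have hk : ∀ s, deriv (fun t => Real.sqrt (v t) * f t) s =
      deriv v s / (2 * Real.sqrt (v s)) * f s + Real.sqrt (v s) * deriv f s := fun s =>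
    (((dv s).sqrt (hvpos s).ne').mul (df s)).deriv
  have hG : ContDiff ℝ 1 (fun t => (1 / 2) * deriv v t * (f t * f t)) :=
    (contDiff_const.mul hv1).mul (hf.mul hf)
  have hGc : HasCompactSupport (fun t => (1 / 2) * deriv v t * (f t * f t)) :=
    (hfc.mul_left (f := f)).mul_left (f := fun t => (1 / 2) * deriv v t)
  have hGd : ∀ s, deriv (fun t => (1 / 2) * deriv v t * (f t * f t)) s =
      (1 / 2) * deriv (deriv v) s * (f s * f s) +
        (1 / 2) * deriv v s * (deriv f s * f s + f s * deriv f s) := fun s =>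
    (((dv1 s).const_mul (1 / 2)).mul ((df s).mul (df s))).deriv
  have hI := HasCompactSupport.integral_Ioi_deriv_eq hG hGc 0
  have hGi : MeasureTheory.IntegrableOn
      (deriv (fun t => (1 / 2) * deriv v t * (f t * f t))) (Set.Ioi (0 : ℝ)) :=
    ((hG.continuous_deriv le_rfl).integrable_of_hasCompactSupport hGc.deriv).integrableOn
  have hFi : MeasureTheory.IntegrableOn
      (fun s => (deriv f s) ^ 2 * v s) (Set.Ioi (0 : ℝ)) := by
    have hc : Continuous (deriv f) := hf.continuous_deriv le_rfl
    have hvc : Continuous v := hv.continuous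
    have hs : HasCompactSupport (fun s => (deriv f s) ^ 2 * v s) := by
      have h : HasCompactSupport (fun s => deriv f s * (deriv f s * v s)) :=
        hfc.deriv.mul_right
      convert h using 2
      ring
    exact (((hc.pow 2).mul hvc).integrable_of_hasCompactSupport hs).integrableOn
  have key : ∀ s, (deriv (fun t => Real.sqrt (v t) * f t) s) ^ 2 +
          ((1 / 2) * deriv (deriv (fun t => Real.log (v t))) s +
            (1 / 4) * (deriv (fun t => Real.log (v t)) s) ^ 2) *
          (Real.sqrt (v s) * f s) ^ 2 = (deriv f s) ^ 2 * v s +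
        deriv (fun t => (1 / 2) * deriv v t * (f t * f t)) s := by
    intro s
    rw [hL, hL2, hk, hGd]
    have hp : 0 < Real.sqrt (v s) := Real.sqrt_pos.mpr (hvpos s)
    have hq : v s = Real.sqrt (v s) ^ 2 := (Real.sq_sqrt (hvpos s).le).symm
    generalize Real.sqrt (v s) = r at hp hq
    beta_reduce
    rw [hq]
    field_simp
    ring
  simp_rw [key]
  rw [MeasureTheory.integral_add hFi hGi, hI, hf0]
  simp
end

section
/- Let P : ℝ → ℝ be continuously differentiable and even, i.e. P (−x) = P x for all x ∈ ℝ. Define V : ℝ → ℝ by V x = (1/2) * deriv P x + (1/4) * (P x)^2. If V is real-analytic at every point of ℝ, then P is real-analytic at every point of ℝ. -/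
open Filter Topology in
theorem analyticAt_of_deriv_aux (f : ℝ → ℝ) (hf : ContDiff ℝ 1 f) (x : ℝ)
    (h : AnalyticAt ℝ (deriv f) x) : AnalyticAt ℝ f x := by
  obtain ⟨p, hp⟩ := h
  rw [hasFPowerSeriesAt_iff] at hp
  obtain ⟨e, he, hs⟩ := Metric.eventually_nhds_iff.1 hp
  set a : ℕ → ℝ := fun n => p.coeff n with ha
  let q : FormalMultilinearSeries ℝ ℝ ℝ := FormalMultilinearSeries.ofScalars ℝ
    (fun n : ℕ => Nat.casesOn n (f x) (fun m => a m / ((m : ℝ) + 1)))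
  refine ⟨q, ?_⟩
  rw [hasFPowerSeriesAt_iff]
  refine Metric.eventually_nhds_iff.2 ⟨e / 2, by positivity, fun z hz => ?_⟩
  have hr : Summable fun n => |(e / 2) ^ n * a n| := by
    have := (hs (y := e / 2) (by simp [abs_of_pos he]; linarith)).summable
    simpa only [smul_eq_mul] using this.abs
  have hz' : |z| < e / 2 := by simpa using hz
  have hb : ∀ t ∈ Set.uIoc (0 : ℝ) z, |t| < e / 2 := by
    intro t ht
    have h1 := abs_lt.1 hz'
    rcases Set.mem_uIoc.1 ht with h | h <;> rw [abs_lt] <;> constructor <;> linarith [h.1, h.2]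
  have key := intervalIntegral.hasSum_integral_of_dominated_convergence
    (μ := MeasureTheory.volume) (a := (0 : ℝ)) (b := z)
    (F := fun n t => t ^ n * a n) (f := fun t => deriv f (x + t))
    (fun n _ => |(e / 2) ^ n * a n|)
    (fun n => (by fun_prop : Continuous fun t : ℝ => t ^ n * a n).aestronglyMeasurable)
    (fun n => Filter.Eventually.of_forall fun t ht => by
      rw [Real.norm_eq_abs, abs_mul, abs_mul, abs_pow, abs_pow, abs_of_pos (half_pos he)]
      have := (hb t ht).le
      gcongr)
    (Filter.Eventually.of_forall fun t ht => hr)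
    intervalIntegrable_const
    (Filter.Eventually.of_forall fun t ht => by
      have := hs (y := t) (by simp; linarith [hb t ht])
      simpa only [smul_eq_mul] using this)
  have hI : ∫ t in (0 : ℝ)..z, deriv f (x + t) = f (x + z) - f x := by
    rw [intervalIntegral.integral_comp_add_left (fun t => deriv f t) x, add_zero]
    refine intervalIntegral.integral_deriv_eq_sub
      (fun t _ => (hf.differentiable one_ne_zero) t) ?_
    exact (hf.continuous_deriv le_rfl).intervalIntegrable _ _
  rw [hI] at key
  rw [← hasSum_nat_add_iff' 1]
  convert key using 1
  · funext n
    simp [q, FormalMultilinearSeries.coeff_ofScalars]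
    ring
  · simp [q, FormalMultilinearSeries.coeff_ofScalars]


/-- The key analytic step in the Lemma of Section 8 of Lott,
"On the Spectrum of a Finite-Volume Negatively-Curved Manifold":
if `P` is `C¹` and even and `V = ½ P' + ¼ P²` is real-analytic everywhere,
then `P` is real-analytic everywhere. -/
theorem stmt_6 (P : ℝ → ℝ) (hP : ContDiff ℝ 1 P)
    (heven : ∀ x : ℝ, P (-x) = P x)
    (hV : ∀ x : ℝ, AnalyticAt ℝ
      (fun y => (1 / 2) * deriv P y + (1 / 4) * (P y) ^ 2) x) :
    ∀ x : ℝ, AnalyticAt ℝ P x := by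
  intro x
  apply analyticAt_of_deriv_aux P hP x
  have hodd : ∀ y, deriv P (-y) = - deriv P y := by
    intro y
    have h1 : (fun y => P (-y)) = P := funext heven
    have h2 := deriv_comp_neg P y
    rw [h1] at h2
    linarith
  have h1 := hV x
  have h2 := (hV (-x)).comp_of_eq (analyticAt_id.neg : AnalyticAt ℝ (-id) x) (by simp)
  have h3 := h1.sub h2
  convert h3 using 1
  funext y
  simp [hodd, heven]
  ring
end

section
/- Let H be a complex Hilbert space, let T, S : H →L[ℂ] H be selfadjoint with S ∘ S = T, and suppose there is μ > 0 such that for all x ∈ H, μ * ‖x‖^2 ≤ re ⟪T x, x⟫. Let c be a real number with 0 ≤ c < μ. Then T − c • 1 is invertible and ‖S ∘ (T − c • 1)⁻¹‖ ≤ Real.sqrt μ / (μ − c). -/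
open scoped InnerProductSpace

/-- Abstract form of the bound on `𝒯 = λ₀ (Δ̂ − λ₀²)⁻¹ d̂*` in Proposition 3
(Section 6) of Lott, "On the Spectrum of a Finite-Volume Negatively-Curved
Manifold": if `T`, `S` are selfadjoint with `S² = T`, `⟪Tx, x⟫ ≥ μ ‖x‖²`,
`μ > 0`, and `0 ≤ c < μ`, then `T − c·1` is invertible and
`‖S (T − c·1)⁻¹‖ ≤ √μ/(μ − c)`. -/
theorem stmt_10 {H : Type*} [NormedAddCommGroup H] [InnerProductSpace ℂ H]
    [CompleteSpace H]
    (T S : H →L[ℂ] H) (hT : IsSelfAdjoint T) (hS : IsSelfAdjoint S)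
    (hS2 : S * S = T)
    (μ : ℝ) (hμ : 0 < μ)
    (hlow : ∀ x : H, μ * ‖x‖ ^ 2 ≤ (⟪T x, x⟫_ℂ).re)
    (c : ℝ) (hc0 : 0 ≤ c) (hcμ : c < μ) :
    ∃ Tinv : H →L[ℂ] H,
      (T - (c : ℂ) • 1) * Tinv = 1 ∧ Tinv * (T - (c : ℂ) • 1) = 1 ∧
      ‖S * Tinv‖ ≤ Real.sqrt μ / (μ - c) := by
  have hTS : ∀ y : H, (⟪T y, y⟫_ℂ).re = ‖S y‖ ^ 2 := by
    intro y
    have h1 : ⟪T y, y⟫_ℂ = ⟪S y, S y⟫_ℂ := by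
      rw [← hS2]
      exact hS.isSymmetric (S y) y
    rw [h1]
    exact inner_self_eq_norm_sq (𝕜 := ℂ) (S y)
  have hre : ∀ y : H, (⟪(T - (c : ℂ) • (1 : H →L[ℂ] H)) y, y⟫_ℂ).re
      = ‖S y‖ ^ 2 - c * ‖y‖ ^ 2 := by
    intro y
    have h2 : (⟪y, y⟫_ℂ) = ((‖y‖ ^ 2 : ℝ) : ℂ) := by
      rw [inner_self_eq_norm_sq_to_K]; simp
    have h3 : (T - (c : ℂ) • (1 : H →L[ℂ] H)) y = T y - (c : ℂ) • y := rfl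
    rw [h3, inner_sub_left, inner_smul_left, h2, Complex.sub_re, hTS, Complex.conj_ofReal,
      ← Complex.ofReal_mul, Complex.ofReal_re]
  have hU : IsUnit (T - (c : ℂ) • (1 : H →L[ℂ] H)) := by
    refine ContinuousLinearMap.isUnit_of_forall_le_norm_inner_map _
      (c := ⟨μ - c, (sub_pos.2 hcμ).le⟩) (sub_pos.2 hcμ) fun x => ?_
    refine le_trans ?_ (Complex.re_le_norm _)
    rw [hre, ← hTS]
    have := hlow x
    change ‖x‖ ^ 2 * (μ - c) ≤ _
    linarith
  obtain ⟨u, hu⟩ := hU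
  have hr : 0 < Real.sqrt μ := Real.sqrt_pos.2 hμ
  have hr2 : Real.sqrt μ ^ 2 = μ := Real.sq_sqrt hμ.le
  have hd : 0 < μ - c := sub_pos.2 hcμ
  have hmul : (T - (c : ℂ) • (1 : H →L[ℂ] H)) * (↑u⁻¹ : H →L[ℂ] H) = 1 := by
    rw [← hu]; exact u.mul_inv
  refine ⟨(↑u⁻¹ : H →L[ℂ] H), hmul, by rw [← hu]; exact u.inv_mul, ?_⟩
  refine ContinuousLinearMap.opNorm_le_bound _ (by positivity) fun x => ?_
  have hx : (T - (c : ℂ) • (1 : H →L[ℂ] H)) ((↑u⁻¹ : H →L[ℂ] H) x) = x :=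
    congrArg (fun f : H →L[ℂ] H => f x) hmul
  change ‖S ((↑u⁻¹ : H →L[ℂ] H) x)‖ ≤ _
  generalize (↑u⁻¹ : H →L[ℂ] H) x = y at hx
  have h1 : ‖S y‖ ^ 2 - c * ‖y‖ ^ 2 ≤ ‖x‖ * ‖y‖ := by
    rw [← hre, hx]
    exact (Complex.re_le_norm _).trans (norm_inner_le_norm _ _)
  have h2 : Real.sqrt μ * ‖y‖ ≤ ‖S y‖ := by
    have := hlow y
    rw [hTS] at this
    refine (pow_le_pow_iff_left₀ (by positivity) (norm_nonneg _) two_ne_zero).1 ?_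
    rw [mul_pow, hr2]
    exact this
  rw [div_mul_eq_mul_div, le_div_iff₀ hd]
  rcases eq_or_ne y 0 with h0 | h0
  · simp only [h0, map_zero, norm_zero, zero_mul]
    positivity
  · have hn : 0 < ‖y‖ := norm_pos_iff.2 h0
    refine le_of_mul_le_mul_left ?_ hn
    have h3 : 0 ≤ (Real.sqrt μ * ‖S y‖ + c * ‖y‖) * (‖S y‖ - Real.sqrt μ * ‖y‖) :=
      mul_nonneg (by positivity) (sub_nonneg.2 h2)
    have h4 := mul_le_mul_of_nonneg_left h1 hr.le
    have h5 : ‖y‖ * (‖S y‖ * (μ - c)) = ‖y‖ * (‖S y‖ * (Real.sqrt μ ^ 2 - c)) := by rw [hr2]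
    rw [h5]
    linarith
end
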